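/- There is an absolute constant c > 0 such that for every n ≥ 2, every t ∈ {1, …, n−1}, and every distribution p on {-1,1}^n: E_{ρ∼D(t+1,p)}[ ‖μ(p_{|ρ})‖₂² ] ≥ c · (1/(log n)²) · ((t+1)/(n−t)) · E_{T∼S(t)}[ d_TV(p_{T̄}, U)² ]. -/

import Mathlib

/-!
The inequality holds without the logarithmic loss, and separately for each set `T`.

Writing a star set of size `t + 1` as `S = insert i T` with `i ∉ T`, the `i`-th mean of the
restriction of `p` with star set `S` is, up to sign, the relative difference
`(q u - q uⁱ) / (q u + q uⁱ)` of the projection `q = p_{T̄}` across the edge in direction `i`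
(`meanVec_restrictDist`,
`condMean_insert_sq`). Double counting the pairs `(S, i)` (`sum_powersetCard_succ`) produces
the factor `C(n,t) / C(n,t+1) = (t+1)/(n-t)`, so it suffices to bound `d_TV(q, U)²` by
the sum of the relative influences of a single distribution `q` on a cube.

This follows from the Poincaré inequality on the cube applied to `√q`: by Cauchy–Schwarz
`d_TV(q, U)²` is at most the variance of the square root of the density of `q`, and
`(√a - √b)² ≤ (a - b)² / (a + b)` compares the Dirichlet form of `√q` with the relative
influences (`dTVU_sq_le`). Finally `log n ≥ log 2` turns the constant `1/2` into an admissible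
choice of `c`.
-/

open scoped Classical

noncomputable section

namespace Subcube

/-- The ±1 value of a Boolean coordinate. -/
def sgn (b : Bool) : ℝ := if b then 1 else -1

/-- Flip coordinate `i` of `x`. -/
def flipAt {ι : Type*} [DecidableEq ι] (i : ι) (x : ι → Bool) : ι → Bool :=
  Function.update x i (!(x i))

/-- `p` is a probability mass function. -/
def IsDist {α : Type*} [Fintype α] (p : α → ℝ) : Prop :=
  (∀ a, 0 ≤ p a) ∧ ∑ a, p a = 1

/-- Total variation distance to the uniform distribution. -/
def dTVU {α : Type*} [Fintype α] (p : α → ℝ) : ℝ :=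
  (1/2) * ∑ a, |p a - 1 / (Fintype.card α : ℝ)|

/-- Probability mass of the event that a sample from `p` agrees with `y` outside `S`. -/
def offMass {n : ℕ} (p : (Fin n → Bool) → ℝ) (S : Finset (Fin n)) (y : Fin n → Bool) : ℝ :=
  ∑ x : Fin n → Bool, if ∀ j ∉ S, x j = y j then p x else 0

/-- Projection of `p` to the coordinates outside `S`. -/
def projDist {n : ℕ} (p : (Fin n → Bool) → ℝ) (S : Finset (Fin n)) :
    ({i : Fin n // i ∉ S} → Bool) → ℝ :=
  fun u => ∑ x : Fin n → Bool, if ∀ i : {i : Fin n // i ∉ S}, x i.1 = u i then p x else 0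

/-- Restriction of `p` with star set `S` and non-star coordinates set according to `y`. -/
def restrictDist {n : ℕ} (p : (Fin n → Bool) → ℝ) (S : Finset (Fin n)) (y : Fin n → Bool) :
    ({i : Fin n // i ∈ S} → Bool) → ℝ :=
  fun z =>
    (∑ x : Fin n → Bool,
      if (∀ i : {i : Fin n // i ∈ S}, x i.1 = z i) ∧ (∀ j ∉ S, x j = y j) then p x else 0)
      / offMass p S y

/-- Mean of coordinate `i` of `p` conditioned on agreeing with `y` outside `S`
(the coordinate `i` of the mean vector of the restriction with star set `S`, for `i ∈ S`). -/
def condMean {n : ℕ} (p : (Fin n → Bool) → ℝ) (S : Finset (Fin n)) (y : Fin n → Bool)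
    (i : Fin n) : ℝ :=
  (∑ x : Fin n → Bool, if ∀ j ∉ S, x j = y j then p x * sgn (x i) else 0) / offMass p S y

/-- Mean vector of a distribution on a Boolean cube. -/
def meanVec {ι : Type*} [Fintype ι] (p : (ι → Bool) → ℝ) : ι → ℝ :=
  fun i => ∑ x : ι → Bool, p x * sgn (x i)

/-- Squared Euclidean norm. -/
def normSq {ι : Type*} [Fintype ι] (v : ι → ℝ) : ℝ := ∑ i, v i ^ 2

/-- Euclidean norm. -/
def l2norm {ι : Type*} [Fintype ι] (v : ι → ℝ) : ℝ := Real.sqrt (normSq v)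

/-! ### The Poincaré inequality and distance to uniform -/

section Cube

variable {ι : Type*} [DecidableEq ι]

lemma flipAt_flipAt (i : ι) (x : ι → Bool) : flipAt i (flipAt i x) = x := by
  simp [flipAt]

lemma flipAt_comm (i j : ι) (x : ι → Bool) :
    flipAt i (flipAt j x) = flipAt j (flipAt i x) := by
  by_cases h : i = j
  · rw [h]
  · have h' : j ≠ i := fun e => h e.symm
    simp only [flipAt, Function.update_of_ne h, Function.update_of_ne h']
    rw [Function.update_comm h]

variable [Fintype ι]

lemma sum_flipAt (i : ι) (g : (ι → Bool) → ℝ) : ∑ x, g (flipAt i x) = ∑ x, g x :=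
  Equiv.sum_comp (Function.Involutive.toPerm (flipAt i) (flipAt_flipAt i)) g

lemma eq_of_flipAt_invariant (h : (ι → Bool) → ℝ) (hh : ∀ i x, h (flipAt i x) = h x)
    (x y : ι → Bool) : h x = h y := by
  have key : ∀ s : Finset ι, h (fun j => if j ∈ s then y j else x j) = h x := by
    intro s
    induction s using Finset.induction_on with
    | empty => simp
    | insert a s ha ih =>
      rw [← ih]
      by_cases e : x a = y a
      · congr 1
        funext j
        by_cases hj : j = a
        · subst hj; simp [ha, e]
        · simp [hj]
      · rw [← hh a]
        congr 1
        funext j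
        by_cases hj : j = a
        · subst hj
          simp only [flipAt, Function.update_self, Finset.mem_insert_self, if_true, ha, if_false]
          revert e
          cases x j <;> cases y j <;> simp
        · simp [flipAt, hj]
  simpa using (key Finset.univ).symm

/-- Averaging `g` over the coordinates in `s` one at a time: each averaging step in direction `i`
costs exactly a quarter of the current Dirichlet energy in direction `i`, and does not increase
the energy in any direction. -/
lemma exists_average (g : (ι → Bool) → ℝ) (s : Finset ι) :
    ∃ h : (ι → Bool) → ℝ, ∑ x, h x = ∑ x, g x ∧ (∀ i ∈ s, ∀ x, h (flipAt i x) = h x) ∧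
      (∀ j, ∑ x, (h x - h (flipAt j x)) ^ 2 ≤ ∑ x, (g x - g (flipAt j x)) ^ 2) ∧
      ∑ x, g x ^ 2 ≤ ∑ x, h x ^ 2 + 1 / 4 * ∑ i ∈ s, ∑ x, (g x - g (flipAt i x)) ^ 2 := by
  induction s using Finset.induction_on with
  | empty => exact ⟨g, rfl, by simp, fun _ => le_rfl, by simp⟩
  | insert a s ha ih =>
    obtain ⟨h, h1, h2, h3, h4⟩ := ih
    refine ⟨fun x => (h x + h (flipAt a x)) / 2, ?_, ?_, ?_, ?_⟩
    · rw [← Finset.sum_div, Finset.sum_add_distrib, sum_flipAt, h1]; ring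
    · intro i hi x
      rcases Finset.mem_insert.1 hi with rfl | hi
      · simp only [flipAt_flipAt]; ring
      · simp only [flipAt_comm a i, h2 i hi]
    · intro j
      refine le_trans ?_ (h3 j)
      have e := sum_flipAt a (fun x => (h x - h (flipAt j x)) ^ 2)
      calc ∑ x, ((h x + h (flipAt a x)) / 2 -
              (h (flipAt j x) + h (flipAt a (flipAt j x))) / 2) ^ 2
          ≤ ∑ x, ((h x - h (flipAt j x)) ^ 2 +
              (h (flipAt a x) - h (flipAt j (flipAt a x))) ^ 2) / 2 := by
            refine Finset.sum_le_sum fun x _ => ?_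
            rw [flipAt_comm a j]
            nlinarith [sq_nonneg ((h x - h (flipAt j x)) -
              (h (flipAt a x) - h (flipAt j (flipAt a x))))]
        _ = ∑ x, (h x - h (flipAt j x)) ^ 2 := by
            rw [← Finset.sum_div, Finset.sum_add_distrib, e]; ring
    · have e := sum_flipAt a (fun x => h x ^ 2)
      have par : ∑ x, ((h x + h (flipAt a x)) / 2) ^ 2 +
          1 / 4 * ∑ x, (h x - h (flipAt a x)) ^ 2 = ∑ x, h x ^ 2 := by
        have : ∑ x, h x ^ 2 = (∑ x, h x ^ 2 + ∑ x, h (flipAt a x) ^ 2) / 2 := by rw [e]; ring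
        rw [this, Finset.mul_sum, ← Finset.sum_add_distrib, ← Finset.sum_add_distrib,
          Finset.sum_div]
        exact Finset.sum_congr rfl fun x _ => by ring
      rw [Finset.sum_insert ha]
      have := h3 a
      linarith

/-- The Poincaré inequality on the cube, with unnormalised sums. -/
lemma poincare (g : (ι → Bool) → ℝ) :
    ∑ x, g x ^ 2 - (∑ x, g x) ^ 2 / Fintype.card (ι → Bool) ≤
      1 / 4 * ∑ i, ∑ x, (g x - g (flipAt i x)) ^ 2 := by
  obtain ⟨h, h1, h2, -, h4⟩ := exists_average g Finset.univ
  have hc : ∀ x, h x = h (fun _ => true) := fun x =>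
    eq_of_flipAt_invariant h (fun i => h2 i (Finset.mem_univ i)) _ _
  have hN : (Fintype.card (ι → Bool) : ℝ) ≠ 0 := Nat.cast_ne_zero.2 Fintype.card_ne_zero
  have hs : ∑ x, h x ^ 2 = (∑ x, g x) ^ 2 / Fintype.card (ι → Bool) := by
    rw [← h1, Finset.sum_congr rfl fun x _ => hc x,
      Finset.sum_congr rfl fun x _ => congrArg (· ^ 2) (hc x)]
    simp only [Finset.sum_const, Finset.card_univ, nsmul_eq_mul]
    field_simp
  linarith

/-- The relative influence of coordinate `i` on `q`: the expectation under `u ∼ q` of the square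
of the mean of coordinate `i` of `q` conditioned on all the other coordinates of `u`. -/
def relInfl (q : (ι → Bool) → ℝ) (i : ι) : ℝ :=
  ∑ u, q u * ((q u - q (flipAt i u)) / (q u + q (flipAt i u))) ^ 2

/-- Symmetrising in `u ↔ flipAt i u` turns the relative influence into
`½ ∑ (a - b)² / (a + b)` with `a = q u` and `b = q (flipAt i u)`. -/
lemma sum_sqrt_sub_sq_le (q : (ι → Bool) → ℝ) (hq : ∀ u, 0 ≤ q u) (i : ι) :
    ∑ u, (√(q u) - √(q (flipAt i u))) ^ 2 ≤ 2 * relInfl q i := by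
  have e := sum_flipAt i
    (fun u => q u * ((q u - q (flipAt i u)) / (q u + q (flipAt i u))) ^ 2)
  have : 2 * relInfl q i = relInfl q i + ∑ u, q (flipAt i u) *
      ((q (flipAt i u) - q u) / (q (flipAt i u) + q u)) ^ 2 := by
    simp only [flipAt_flipAt] at e
    rw [e, relInfl]; ring
  rw [this, relInfl, ← Finset.sum_add_distrib]
  refine Finset.sum_le_sum fun u _ => ?_
  have ha := hq u
  have hb := hq (flipAt i u)
  generalize q u = a at *
  generalize q (flipAt i u) = b at *
  obtain ⟨r, hr, rfl⟩ : ∃ r, 0 ≤ r ∧ a = r ^ 2 := ⟨√a, Real.sqrt_nonneg a, (Real.sq_sqrt ha).symm⟩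
  obtain ⟨s, hs, rfl⟩ : ∃ s, 0 ≤ s ∧ b = s ^ 2 := ⟨√b, Real.sqrt_nonneg b, (Real.sq_sqrt hb).symm⟩
  rw [Real.sqrt_sq hr, Real.sqrt_sq hs]
  by_cases h0 : r ^ 2 + s ^ 2 = 0
  · have hr0 : r = 0 := by nlinarith
    have hs0 : s = 0 := by nlinarith
    simp [hr0, hs0]
  · have hp : 0 < r ^ 2 + s ^ 2 := lt_of_le_of_ne (by positivity) (Ne.symm h0)
    have e2 : r ^ 2 * ((r ^ 2 - s ^ 2) / (r ^ 2 + s ^ 2)) ^ 2 +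
        s ^ 2 * ((s ^ 2 - r ^ 2) / (s ^ 2 + r ^ 2)) ^ 2 =
        (r - s) ^ 2 * (r + s) ^ 2 / (r ^ 2 + s ^ 2) := by
      rw [add_comm (s ^ 2) (r ^ 2)]
      field_simp
      ring
    rw [e2, le_div_iff₀ hp]
    refine mul_le_mul_of_nonneg_left ?_ (sq_nonneg _)
    nlinarith [mul_nonneg hr hs]

/-- Cauchy–Schwarz applied to `|q - 1/N| = |√q - 1/√N| * |√q + 1/√N|`: the squared distance to
uniform is at most the variance of the square root of the density. -/
lemma dTVU_sq_le_variance (q : (ι → Bool) → ℝ) (hq : IsDist q) :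
    dTVU q ^ 2 ≤ ∑ x, √(q x) ^ 2 - (∑ x, √(q x)) ^ 2 / Fintype.card (ι → Bool) := by
  have hN : (0 : ℝ) < Fintype.card (ι → Bool) := Nat.cast_pos.2 Fintype.card_pos
  unfold dTVU
  obtain ⟨a, ha, haN⟩ : ∃ a : ℝ, 0 ≤ a ∧ a ^ 2 = 1 / (Fintype.card (ι → Bool) : ℝ) :=
    ⟨√(1 / (Fintype.card (ι → Bool) : ℝ)), Real.sqrt_nonneg _, Real.sq_sqrt (by positivity)⟩
  have hs1 : ∑ x, √(q x) ^ 2 = 1 := by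
    rw [← hq.2]
    exact Finset.sum_congr rfl fun x _ => Real.sq_sqrt (hq.1 x)
  have hNa : (Fintype.card (ι → Bool) : ℝ) * a ^ 2 = 1 := by rw [haN]; field_simp
  have hcs := Finset.sum_mul_sq_le_sq_mul_sq Finset.univ
    (fun x => |√(q x) - a|) (fun x => |√(q x) + a|)
  have e1 : ∑ x, |√(q x) - a| * |√(q x) + a| =
      ∑ x, |q x - 1 / (Fintype.card (ι → Bool) : ℝ)| := by
    refine Finset.sum_congr rfl fun x _ => ?_
    rw [← abs_mul, ← haN]
    congr 1
    nlinarith [Real.sq_sqrt (hq.1 x)]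
  have e2 : ∑ x, |√(q x) - a| ^ 2 = 2 - 2 * a * ∑ x, √(q x) := by
    have : ∀ x, |√(q x) - a| ^ 2 = √(q x) ^ 2 - 2 * a * √(q x) + a ^ 2 := fun x => by
      rw [sq_abs]; ring
    simp only [this, Finset.sum_add_distrib, Finset.sum_sub_distrib, ← Finset.mul_sum, hs1,
      Finset.sum_const, Finset.card_univ, nsmul_eq_mul, hNa]
    ring
  have e3 : ∑ x, |√(q x) + a| ^ 2 = 2 + 2 * a * ∑ x, √(q x) := by
    have : ∀ x, |√(q x) + a| ^ 2 = √(q x) ^ 2 + 2 * a * √(q x) + a ^ 2 := fun x => by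
      rw [sq_abs]; ring
    simp only [this, Finset.sum_add_distrib, ← Finset.mul_sum, hs1,
      Finset.sum_const, Finset.card_univ, nsmul_eq_mul, hNa]
    ring
  rw [e1, e2, e3] at hcs
  have e4 : (∑ x, √(q x)) ^ 2 / (Fintype.card (ι → Bool) : ℝ) = a ^ 2 * (∑ x, √(q x)) ^ 2 := by
    rw [haN]; ring
  rw [hs1, e4]
  nlinarith

lemma dTVU_sq_le (q : (ι → Bool) → ℝ) (hq : IsDist q) :
    dTVU q ^ 2 ≤ 1 / 2 * ∑ i, relInfl q i := by
  have h1 := dTVU_sq_le_variance q hq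
  have h2 := poincare (fun x => √(q x))
  have h3 := Finset.sum_le_sum fun i (_ : i ∈ Finset.univ) => sum_sqrt_sub_sq_le q hq.1 i
  rw [← Finset.mul_sum] at h3
  linarith

end Cube

/-! ### Restrictions and projections -/

section Projection

variable {n : ℕ}

/-- The coordinates of `x` outside `T`. -/
def proj (T : Finset (Fin n)) (x : Fin n → Bool) : {i : Fin n // i ∉ T} → Bool := fun i => x i

lemma projDist_eq (p : (Fin n → Bool) → ℝ) (T : Finset (Fin n)) (u) :
    projDist p T u = ∑ x, if proj T x = u then p x else 0 := by
  unfold projDist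
  refine Finset.sum_congr rfl fun x _ => ?_
  simp only [funext_iff, proj]

/-- Expectations under the projection are expectations under `p`. -/
lemma sum_projDist_mul (p : (Fin n → Bool) → ℝ) (T : Finset (Fin n))
    (F : ({i : Fin n // i ∉ T} → Bool) → ℝ) :
    ∑ u, projDist p T u * F u = ∑ x, p x * F (proj T x) := by
  simp only [projDist_eq, Finset.sum_mul]
  rw [Finset.sum_comm]
  refine Finset.sum_congr rfl fun x _ => ?_
  simp [ite_mul]

lemma isDist_projDist (p : (Fin n → Bool) → ℝ) (hp : IsDist p) (T : Finset (Fin n)) :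
    IsDist (projDist p T) := by
  refine ⟨fun u => ?_, ?_⟩
  · rw [projDist_eq]
    exact Finset.sum_nonneg fun x _ => by split_ifs <;> simp [hp.1 x]
  · simpa [hp.2] using sum_projDist_mul p T (fun _ => 1)

lemma meanVec_restrictDist (p : (Fin n → Bool) → ℝ) (S : Finset (Fin n)) (x : Fin n → Bool)
    (i : {i : Fin n // i ∈ S}) : meanVec (restrictDist p S x) i = condMean p S x i := by
  unfold meanVec restrictDist condMean
  simp only [div_mul_eq_mul_div, ← Finset.sum_div, Finset.sum_mul]
  congr 1
  rw [Finset.sum_comm]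
  refine Finset.sum_congr rfl fun y _ => ?_
  by_cases h : ∀ j ∉ S, y j = x j
  · rw [if_pos h, Finset.sum_eq_single (fun i : {i : Fin n // i ∈ S} => y i)]
    · rw [if_pos ⟨fun _ => rfl, h⟩]
    · intro z _ hz
      rw [if_neg, zero_mul]
      exact fun hh => hz (funext fun i => (hh.1 i).symm)
    · simp
  · rw [if_neg h]
    refine Finset.sum_eq_zero fun z _ => ?_
    rw [if_neg fun hh => h hh.2, zero_mul]

lemma proj_eq_proj_iff (T : Finset (Fin n)) {i : Fin n} (hi : i ∉ T) (x y : Fin n → Bool) :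
    proj T y = proj T x ↔ (∀ j ∉ insert i T, y j = x j) ∧ y i = x i := by
  simp only [funext_iff, proj, Subtype.forall, Finset.mem_insert, not_or]
  constructor
  · exact fun h => ⟨fun j hj => h j hj.2, h i hi⟩
  · rintro ⟨h, h'⟩ j hj
    by_cases e : j = i
    · rw [e, h']
    · exact h j ⟨e, hj⟩

lemma proj_eq_flipAt_iff (T : Finset (Fin n)) {i : Fin n} (hi : i ∉ T) (x y : Fin n → Bool) :
    proj T y = flipAt ⟨i, hi⟩ (proj T x) ↔
      (∀ j ∉ insert i T, y j = x j) ∧ y i ≠ x i := by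
  have e : flipAt ⟨i, hi⟩ (proj T x) = proj T (flipAt i x) := by
    funext ⟨j, hj⟩
    by_cases e : j = i
    · subst e; simp [flipAt, proj]
    · have : (⟨j, hj⟩ : {i : Fin n // i ∉ T}) ≠ ⟨i, hi⟩ := fun h => e (congrArg Subtype.val h)
      simp [flipAt, proj, e]
  rw [e, proj_eq_proj_iff T hi]
  refine and_congr ?_ ?_
  · refine forall₂_congr fun j hj => ?_
    have : j ≠ i := fun h => hj (h ▸ Finset.mem_insert_self i T)
    simp [flipAt, this]
  · simp only [flipAt, Function.update_self]
    cases x i <;> cases y i <;> simp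

/-- With star set `S = insert i T`, agreeing with `x` outside `S` splits according to the value of
coordinate `i` into the two fibres of the projection to `T̄` at the ends of the edge in
direction `i`. -/
lemma condMean_insert_sq (p : (Fin n → Bool) → ℝ) (T : Finset (Fin n)) {i : Fin n}
    (hi : i ∉ T) (x : Fin n → Bool) :
    condMean p (insert i T) x i ^ 2 =
      ((projDist p T (proj T x) - projDist p T (flipAt ⟨i, hi⟩ (proj T x))) /
        (projDist p T (proj T x) + projDist p T (flipAt ⟨i, hi⟩ (proj T x)))) ^ 2 := by
  have hsq : sgn (x i) ^ 2 = 1 := by unfold sgn; split_ifs <;> norm_num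
  have hden : offMass p (insert i T) x =
      projDist p T (proj T x) + projDist p T (flipAt ⟨i, hi⟩ (proj T x)) := by
    rw [projDist_eq, projDist_eq, offMass, ← Finset.sum_add_distrib]
    refine Finset.sum_congr rfl fun y _ => ?_
    simp only [proj_eq_proj_iff T hi, proj_eq_flipAt_iff T hi]
    by_cases h : ∀ j ∉ insert i T, y j = x j <;> by_cases h' : y i = x i <;>
      simp only [h, h', if_false, ne_eq, not_true, not_false_eq_true, add_zero, zero_add,
        and_true, and_false]
  have hnum : (∑ y : Fin n → Bool,
      if ∀ j ∉ insert i T, y j = x j then p y * sgn (y i) else 0) = sgn (x i) *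
      (projDist p T (proj T x) - projDist p T (flipAt ⟨i, hi⟩ (proj T x))) := by
    rw [projDist_eq, projDist_eq, ← Finset.sum_sub_distrib, Finset.mul_sum]
    refine Finset.sum_congr rfl fun y _ => ?_
    simp only [proj_eq_proj_iff T hi, proj_eq_flipAt_iff T hi]
    by_cases h : ∀ j ∉ insert i T, y j = x j
    · by_cases h' : y i = x i
      · rw [if_pos h, if_pos ⟨h, h'⟩, if_neg fun hh => hh.2 h', h']; ring
      · rw [if_pos h, if_neg fun hh => h' hh.2, if_pos ⟨h, h'⟩]
        have : sgn (y i) = - sgn (x i) := by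
          revert h'
          cases x i <;> cases y i <;> simp [sgn]
        rw [this]; ring
    · rw [if_neg h, if_neg fun hh => h hh.1, if_neg fun hh => h hh.1]; ring
  rw [condMean, hnum, hden, mul_div_assoc, mul_pow, hsq, one_mul]

lemma sum_mul_condMean_sq (p : (Fin n → Bool) → ℝ) (T : Finset (Fin n)) {i : Fin n}
    (hi : i ∉ T) :
    ∑ x, p x * condMean p (insert i T) x i ^ 2 = relInfl (projDist p T) ⟨i, hi⟩ := by
  unfold relInfl
  rw [sum_projDist_mul p T (fun u =>
    ((projDist p T u - projDist p T (flipAt ⟨i, hi⟩ u)) /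
      (projDist p T u + projDist p T (flipAt ⟨i, hi⟩ u))) ^ 2)]
  exact Finset.sum_congr rfl fun x _ => by rw [condMean_insert_sq p T hi]

/-- Double counting of the pairs `(S, i)` with `i ∈ S` and `|S| = t + 1` through
`T = S.erase i`. -/
lemma sum_powersetCard_succ (t : ℕ) (F : Finset (Fin n) → Fin n → ℝ) :
    ∑ S ∈ Finset.powersetCard (t + 1) (Finset.univ : Finset (Fin n)), ∑ i ∈ S, F S i =
      ∑ T ∈ Finset.powersetCard t (Finset.univ : Finset (Fin n)), ∑ i ∈ Tᶜ, F (insert i T) i := by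
  rw [Finset.sum_sigma', Finset.sum_sigma']
  refine Finset.sum_bij' (fun a _ => ⟨a.1.erase a.2, a.2⟩) (fun a _ => ⟨insert a.2 a.1, a.2⟩)
    ?_ ?_ ?_ ?_ ?_
  · rintro ⟨S, i⟩ h
    simp only [Finset.mem_sigma, Finset.mem_powersetCard_univ, Finset.mem_compl] at h ⊢
    exact ⟨by rw [Finset.card_erase_of_mem h.2, h.1]; rfl, Finset.notMem_erase i S⟩
  · rintro ⟨T, i⟩ h
    simp only [Finset.mem_sigma, Finset.mem_powersetCard_univ, Finset.mem_compl] at h ⊢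
    exact ⟨by rw [Finset.card_insert_of_notMem h.2, h.1], Finset.mem_insert_self i T⟩
  · rintro ⟨S, i⟩ h
    simp only [Finset.mem_sigma] at h
    simp [Finset.insert_erase h.2]
  · rintro ⟨T, i⟩ h
    simp only [Finset.mem_sigma, Finset.mem_compl] at h
    simp [Finset.erase_insert h.2]
  · rintro ⟨S, i⟩ h
    simp only [Finset.mem_sigma] at h
    simp [Finset.insert_erase h.2]

/-- The expected squared norm of the mean, as a sum of relative influences of projections. -/
lemma sum_normSq_eq (p : (Fin n → Bool) → ℝ) (t : ℕ) :
    ∑ S ∈ Finset.powersetCard (t + 1) (Finset.univ : Finset (Fin n)),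
        ∑ x : Fin n → Bool, p x * normSq (meanVec (restrictDist p S x)) =
      ∑ T ∈ Finset.powersetCard t (Finset.univ : Finset (Fin n)),
        ∑ i : {i : Fin n // i ∉ T}, relInfl (projDist p T) i := by
  have h1 : ∀ S : Finset (Fin n), ∑ x : Fin n → Bool, p x * normSq (meanVec (restrictDist p S x)) =
      ∑ i ∈ S, ∑ x : Fin n → Bool, p x * condMean p S x i ^ 2 := by
    intro S
    rw [Finset.sum_comm]
    refine Finset.sum_congr rfl fun x _ => ?_
    rw [normSq, ← Finset.mul_sum, ← Finset.sum_coe_sort S]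
    simp only [meanVec_restrictDist]
  rw [Finset.sum_congr rfl fun S _ => h1 S,
    sum_powersetCard_succ t fun S i => ∑ x : Fin n → Bool, p x * condMean p S x i ^ 2]
  refine Finset.sum_congr rfl fun T _ => ?_
  rw [Finset.sum_subtype Tᶜ (p := fun i => i ∉ T) (fun i => Finset.mem_compl)]
  exact Finset.sum_congr rfl fun i _ => sum_mul_condMean_sq p T i.2

end Projection


/-- there is an absolute `c > 0` such that for every `n ≥ 2`, `t ∈ {1,…,n−1}`,
and every distribution `p` on `{-1,1}^n`:
`E_{ρ∼D(t+1,p)}[‖μ(p_{|ρ})‖₂²] ≥ c·(1/log²n)·((t+1)/(n−t))·E_{T∼S(t)}[d_TV(p_{T̄},U)²]`. -/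
theorem stmt5 : ∃ c > (0:ℝ), ∀ n : ℕ, 2 ≤ n → ∀ t : ℕ, 1 ≤ t → t < n →
    ∀ p : (Fin n → Bool) → ℝ, IsDist p →
    c * (1 / (Real.log n) ^ 2) * (((t:ℝ) + 1) / ((n:ℝ) - t)) *
        ((1 / (n.choose t : ℝ)) *
          ∑ T ∈ Finset.powersetCard t (Finset.univ : Finset (Fin n)),
            dTVU (projDist p T) ^ 2)
      ≤ (1 / (n.choose (t+1) : ℝ)) *
          ∑ S ∈ Finset.powersetCard (t+1) (Finset.univ : Finset (Fin n)),
            ∑ x : Fin n → Bool, p x * normSq (meanVec (restrictDist p S x)) := by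
  refine ⟨1 / 2, by norm_num, fun n hn t _ htn p hp => ?_⟩
  rw [sum_normSq_eq]
  set A := ∑ T ∈ Finset.powersetCard t (Finset.univ : Finset (Fin n)), dTVU (projDist p T) ^ 2
  set B := ∑ T ∈ Finset.powersetCard t (Finset.univ : Finset (Fin n)),
    ∑ i : {i : Fin n // i ∉ T}, relInfl (projDist p T) i
  have hA : 0 ≤ A := Finset.sum_nonneg fun _ _ => sq_nonneg _
  have hAB : A ≤ 1 / 2 * B := by
    rw [Finset.mul_sum]
    exact Finset.sum_le_sum fun T _ => dTVU_sq_le _ (isDist_projDist p hp T)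
  have hlog : 1 / Real.log n ^ 2 ≤ 4 := by
    have h2 : (1 / 2 : ℝ) ≤ Real.log n := by
      have := Real.log_two_gt_d9
      have := Real.log_le_log (by norm_num : (0:ℝ) < 2) (by exact_mod_cast hn : (2:ℝ) ≤ n)
      linarith
    rw [div_le_iff₀ (by positivity)]
    nlinarith
  have hnt : (0 : ℝ) < n - t := sub_pos.2 (by exact_mod_cast htn)
  have hc0 : (0 : ℝ) < n.choose t := by exact_mod_cast Nat.choose_pos htn.le
  have hc1 : (0 : ℝ) < n.choose (t + 1) := by exact_mod_cast Nat.choose_pos htn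
  -- The ratio of the two binomial coefficients cancels the factor `(t + 1) / (n - t)`.
  have hch : ((t : ℝ) + 1) / (n - t) * (1 / (n.choose t : ℝ)) = 1 / (n.choose (t + 1) : ℝ) := by
    have := Nat.choose_succ_right_eq n t
    have h : (n.choose (t + 1) : ℝ) * (t + 1) = n.choose t * (n - t) := by
      rw [← Nat.cast_sub htn.le]; exact_mod_cast this
    field_simp
    linarith
  calc 1 / 2 * (1 / Real.log n ^ 2) * (((t : ℝ) + 1) / (n - t)) * (1 / (n.choose t : ℝ) * A)
      = 1 / (n.choose (t + 1) : ℝ) * (1 / 2 * (1 / Real.log n ^ 2) * A) := by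
        rw [← hch]; ring
    _ ≤ 1 / (n.choose (t + 1) : ℝ) * B := by
        refine mul_le_mul_of_nonneg_left ?_ (by positivity)
        have := mul_le_mul_of_nonneg_right hlog hA
        linarith

end Subcube
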